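/- Let $r, t, d$ be real numbers with $r > 6$. Define $a_1 = t(r-2) - d$, $b_1 = t$, and recursively $a_{n+1} = (r-5)a_n + (r-6)b_n$, $b_{n+1} = a_n + b_n$ for $n \ge 1$, and set $v_n = a_n + b_n$. Then there exists $\varepsilon > 0$ such that for every real $s$ with $|s| < \varepsilon$, the quantity $1 - (r-4)s + s^2$ is nonzero and $\sum_{n=1}^{\infty} v_n s^n$ converges to $R(s) := \dfrac{(s - (r-4)s^2)v_1 + s^2 v_2}{1 - (r-4)s + s^2}$; moreover, the same rational expression evaluated at $s = 1$ satisfies $\dfrac{tr - 2t - d - 6}{r-6} + R(1) = \dfrac{-6}{r-6}$. -/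

import Mathlib

/-!
For a solution `u` of `u (n + 2) = p * u (n + 1) + q * u n`, multiplying a partial sum of
`∑ u n * s ^ n` by `1 - p * s - q * s ^ 2` telescopes, leaving the numerator of the generating
function and boundary terms that vanish in the limit. The terms `‖u n * s ^ n‖` satisfy a recursive
inequality with coefficients `‖p‖ * ‖s‖` and `‖q‖ * ‖s‖ ^ 2`, so the series converges absolutely as
soon as these add up to less than one. The vertex counts solve the recurrence with `p = r - 4` and
`q = -1`, and at `s = 1` the numerator `(5 - r) * v 1 + v 2` of `R` collapses to `a 1`.
-/

open Filter Finset Topology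

section Recurrence

theorem summable_of_le_mul_add_mul {w : ℕ → ℝ} {α β : ℝ} (hw : ∀ n, 0 ≤ w n)
    (hα : 0 ≤ α) (hβ : 0 ≤ β) (hαβ : α + β < 1)
    (hrec : ∀ n, w (n + 2) ≤ α * w (n + 1) + β * w n) : Summable w := by
  refine summable_of_sum_range_le (c := (w 0 + w 1) / (1 - (α + β))) hw fun N => ?_
  have sum_mono {m n : ℕ} (hmn : m ≤ n) : ∑ i ∈ range m, w i ≤ ∑ i ∈ range n, w i :=
    sum_le_sum_of_subset_of_nonneg (range_mono hmn) fun i _ _ => hw i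
  have sum_shift_one : ∑ i ∈ range N, w (i + 1) ≤ ∑ i ∈ range (N + 2), w i := by
    have := sum_range_succ' w N
    linarith [sum_mono (Nat.le_succ (N + 1)), hw 0]
  have sum_shift_two : ∑ i ∈ range (N + 2), w i = ∑ i ∈ range N, w (i + 2) + w 1 + w 0 := by
    rw [sum_range_succ', sum_range_succ']
  have self_bound : ∑ i ∈ range (N + 2), w i ≤
      (w 0 + w 1) + (α + β) * ∑ i ∈ range (N + 2), w i :=
    calc ∑ i ∈ range (N + 2), w i
        = (w 0 + w 1) + ∑ i ∈ range N, w (i + 2) := by rw [sum_shift_two]; ring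
      _ ≤ (w 0 + w 1) + ∑ i ∈ range N, (α * w (i + 1) + β * w i) := by
          gcongr with i; exact hrec i
      _ = (w 0 + w 1) + (α * ∑ i ∈ range N, w (i + 1) + β * ∑ i ∈ range N, w i) := by
          rw [sum_add_distrib, mul_sum, mul_sum]
      _ ≤ (w 0 + w 1) + (α * ∑ i ∈ range (N + 2), w i + β * ∑ i ∈ range (N + 2), w i) := by
          have sum_init := sum_mono (Nat.le_add_right N 2)
          gcongr w 0 + w 1 + (α * ?_ + β * ?_)
      _ = (w 0 + w 1) + (α + β) * ∑ i ∈ range (N + 2), w i := by ring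
  calc ∑ i ∈ range N, w i ≤ ∑ i ∈ range (N + 2), w i := sum_mono (Nat.le_add_right N 2)
    _ ≤ (w 0 + w 1) / (1 - (α + β)) := by
        rw [le_div_iff₀ (sub_pos.mpr hαβ)]
        linarith

theorem mul_sum_range_of_recurrence {R : Type*} [CommRing R] {p q : R} {u : ℕ → R}
    (hu : ∀ n, u (n + 2) = p * u (n + 1) + q * u n) (s : R) (N : ℕ) :
    (1 - p * s - q * s ^ 2) * ∑ n ∈ range N, u n * s ^ n =
      u 0 + (u 1 - p * u 0) * s -
        (u N * s ^ N + u (N + 1) * s ^ (N + 1) - p * s * (u N * s ^ N)) := by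
  induction N with
  | zero => rw [sum_range_zero]; ring
  | succ N ih => rw [sum_range_succ, mul_add, ih, hu]; ring

variable {𝕜 : Type*} [NormedField 𝕜] {p q s : 𝕜} {u : ℕ → 𝕜}

theorem one_sub_mul_sub_mul_sq_ne_zero (hs : ‖p‖ * ‖s‖ + ‖q‖ * ‖s‖ ^ 2 < 1) :
    1 - p * s - q * s ^ 2 ≠ 0 := by
  intro h
  have hone : p * s + q * s ^ 2 = 1 := by linear_combination -h
  have hlt : ‖p * s + q * s ^ 2‖ < 1 :=
    (norm_add_le _ _).trans_lt (by simpa only [norm_mul, norm_pow] using hs)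
  rw [hone, norm_one] at hlt
  exact lt_irrefl 1 hlt

theorem summable_norm_of_recurrence (hu : ∀ n, u (n + 2) = p * u (n + 1) + q * u n)
    (hs : ‖p‖ * ‖s‖ + ‖q‖ * ‖s‖ ^ 2 < 1) : Summable fun n => ‖u n * s ^ n‖ := by
  refine summable_of_le_mul_add_mul (fun n => norm_nonneg _) (by positivity) (by positivity) hs
    fun n => ?_
  calc ‖u (n + 2) * s ^ (n + 2)‖
      = ‖p * s * (u (n + 1) * s ^ (n + 1)) + q * s ^ 2 * (u n * s ^ n)‖ := by
        rw [hu]; ring_nf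
    _ ≤ ‖p * s * (u (n + 1) * s ^ (n + 1))‖ + ‖q * s ^ 2 * (u n * s ^ n)‖ := norm_add_le _ _
    _ = ‖p‖ * ‖s‖ * ‖u (n + 1) * s ^ (n + 1)‖ + ‖q‖ * ‖s‖ ^ 2 * ‖u n * s ^ n‖ := by
        simp only [norm_mul, norm_pow]

theorem hasSum_of_recurrence (hu : ∀ n, u (n + 2) = p * u (n + 1) + q * u n)
    (hs : ‖p‖ * ‖s‖ + ‖q‖ * ‖s‖ ^ 2 < 1) :
    HasSum (fun n => u n * s ^ n)
      ((u 0 + (u 1 - p * u 0) * s) / (1 - p * s - q * s ^ 2)) := by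
  have hsum := summable_norm_of_recurrence hu hs
  have hD := one_sub_mul_sub_mul_sq_ne_zero hs
  have hterm : Tendsto (fun n => u n * s ^ n) atTop (𝓝 0) :=
    tendsto_zero_iff_norm_tendsto_zero.mpr hsum.tendsto_atTop_zero
  have hboundary : Tendsto
      (fun N => u N * s ^ N + u (N + 1) * s ^ (N + 1) - p * s * (u N * s ^ N)) atTop (𝓝 0) := by
    simpa using (hterm.add (hterm.comp (tendsto_add_atTop_nat 1))).sub (hterm.const_mul (p * s))
  rw [hasSum_iff_tendsto_nat_of_summable_norm hsum]
  have hlim := (hboundary.const_sub (u 0 + (u 1 - p * u 0) * s)).div_const (1 - p * s - q * s ^ 2)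
  simpa only [← mul_sum_range_of_recurrence hu, mul_div_cancel_left₀ _ hD, sub_zero] using hlim

theorem eventually_norm_mul_add_norm_mul_sq_lt_one (p q : 𝕜) :
    ∀ᶠ s : 𝕜 in 𝓝 0, ‖p‖ * ‖s‖ + ‖q‖ * ‖s‖ ^ 2 < 1 := by
  have hcont : Continuous fun s : 𝕜 => ‖p‖ * ‖s‖ + ‖q‖ * ‖s‖ ^ 2 := by fun_prop
  exact (hcont.tendsto' 0 0 (by simp)).eventually_lt_const one_pos

end Recurrence

section MeshExpansion

/-- The rational function `R(s)` extending `∑_{n ≥ 1} v n * s ^ n`, written in terms of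
`v₁ = v 1` and `v₂ = v 2`. Its value at `s = 1` is the Euler sum of `v`. -/
def vertexRational {K : Type*} [Field K] (r v₁ v₂ s : K) : K :=
  ((s - (r - 4) * s ^ 2) * v₁ + s ^ 2 * v₂) / (1 - (r - 4) * s + s ^ 2)

theorem vertex_recurrence {R : Type*} [CommRing R] {r : R} {a b v : ℕ → R}
    (ha : ∀ n ≥ 1, a (n + 1) = (r - 5) * a n + (r - 6) * b n)
    (hb : ∀ n ≥ 1, b (n + 1) = a n + b n) (hv : ∀ n ≥ 1, v n = a n + b n)
    {n : ℕ} (hn : 1 ≤ n) : v (n + 2) = (r - 4) * v (n + 1) - v n := by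
  have hn' : 1 ≤ n + 1 := Nat.le_add_left 1 n
  rw [hv (n + 2) (Nat.le_add_left 1 _), hv (n + 1) hn', hv n hn, ha (n + 1) hn', hb (n + 1) hn',
    ha n hn, hb n hn]
  ring

theorem vertexRational_one {K : Type*} [Field K] (r a₁ b₁ : K) :
    vertexRational r (a₁ + b₁) ((r - 5) * a₁ + (r - 6) * b₁ + (a₁ + b₁)) 1 = -a₁ / (r - 6) := by
  have hnum : (1 - (r - 4) * 1 ^ 2) * (a₁ + b₁) +
      1 ^ 2 * ((r - 5) * a₁ + (r - 6) * b₁ + (a₁ + b₁)) = a₁ := by ring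
  have hden : 1 - (r - 4) * 1 + 1 ^ 2 = -(r - 6) := by ring
  rw [vertexRational, hnum, hden, div_neg, neg_div]

variable {𝕜 : Type*} [NormedField 𝕜] {r : 𝕜} {v : ℕ → 𝕜}

theorem eventually_hasSum_vertexRational
    (hrec : ∀ n ≥ 1, v (n + 2) = (r - 4) * v (n + 1) - v n) :
    ∀ᶠ s : 𝕜 in 𝓝 0, 1 - (r - 4) * s + s ^ 2 ≠ 0 ∧
      HasSum (fun n : ℕ => v (n + 1) * s ^ (n + 1)) (vertexRational r (v 1) (v 2) s) := by
  have hrec' (n : ℕ) : v (n + 2 + 1) = (r - 4) * v (n + 1 + 1) + -1 * v (n + 1) := by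
    linear_combination hrec (n + 1) (Nat.le_add_left 1 n)
  filter_upwards [eventually_norm_mul_add_norm_mul_sq_lt_one (r - 4) (-1)] with s hs
  have hden : 1 - (r - 4) * s - -1 * s ^ 2 = 1 - (r - 4) * s + s ^ 2 := by ring
  have hterm (n : ℕ) : v (n + 1) * s ^ (n + 1) = s * (v (n + 1) * s ^ n) := by ring
  have hsum : vertexRational r (v 1) (v 2) s =
      s * ((v 1 + (v 2 - (r - 4) * v 1) * s) / (1 - (r - 4) * s - -1 * s ^ 2)) := by
    rw [vertexRational, hden]; ring
  refine ⟨hden ▸ one_sub_mul_sub_mul_sq_ne_zero hs, ?_⟩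
  simp only [hterm, hsum]
  exact (hasSum_of_recurrence (u := fun n => v (n + 1)) hrec' hs).mul_left s

theorem vertex_generating_function_general {t d : 𝕜} (hr : r ≠ 6) {a b : ℕ → 𝕜}
    (ha₁ : a 1 = t * (r - 2) - d)
    (ha : ∀ n ≥ 1, a (n + 1) = (r - 5) * a n + (r - 6) * b n)
    (hb : ∀ n ≥ 1, b (n + 1) = a n + b n) (hv : ∀ n ≥ 1, v n = a n + b n) :
    (∃ ε > 0, ∀ s : 𝕜, ‖s‖ < ε →
      1 - (r - 4) * s + s ^ 2 ≠ 0 ∧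
      HasSum (fun n : ℕ => v (n + 1) * s ^ (n + 1)) (vertexRational r (v 1) (v 2) s)) ∧
    (t * r - 2 * t - d - 6) / (r - 6) + vertexRational r (v 1) (v 2) 1 = -6 / (r - 6) := by
  constructor
  · obtain ⟨ε, hε, hball⟩ := Metric.eventually_nhds_iff.mp
      (eventually_hasSum_vertexRational fun _ => vertex_recurrence ha hb hv)
    exact ⟨ε, hε, fun s hs => hball (by rwa [dist_zero_right])⟩
  · rw [hv 1 le_rfl, hv 2 one_le_two, ha 1 le_rfl, hb 1 le_rfl, vertexRational_one,
      ← add_div, div_left_inj' (sub_ne_zero.mpr hr), ha₁]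
    ring

end MeshExpansion

/-- For `r > 6`, with `a₁ = t(r-2) - d`, `b₁ = t`,
`a (n+1) = (r-5) a n + (r-6) b n`, `b (n+1) = a n + b n`, and `v n = a n + b n`,
there exists `ε > 0` such that for `|s| < ε` the denominator `1 - (r-4)s + s²` is
nonzero and `∑_{n ≥ 1} v n * s^n` converges to
`R(s) = ((s - (r-4)s²) v₁ + s² v₂) / (1 - (r-4)s + s²)`; moreover
`(tr - 2t - d - 6)/(r-6) + R(1) = -6/(r-6)`. -/
theorem vertex_generating_function (r t d : ℝ) (hr : r > 6)
    (a b v : ℕ → ℝ)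
    (ha₁ : a 1 = t * (r - 2) - d) (hb₁ : b 1 = t)
    (ha : ∀ n ≥ 1, a (n + 1) = (r - 5) * a n + (r - 6) * b n)
    (hb : ∀ n ≥ 1, b (n + 1) = a n + b n)
    (hv : ∀ n, v n = a n + b n) :
    (∃ ε > 0, ∀ s : ℝ, |s| < ε →
      1 - (r - 4) * s + s ^ 2 ≠ 0 ∧
      HasSum (fun n : ℕ => v (n + 1) * s ^ (n + 1))
        (((s - (r - 4) * s ^ 2) * v 1 + s ^ 2 * v 2) / (1 - (r - 4) * s + s ^ 2))) ∧
    (t * r - 2 * t - d - 6) / (r - 6) +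
        ((1 - (r - 4) * 1 ^ 2) * v 1 + 1 ^ 2 * v 2) / (1 - (r - 4) * 1 + 1 ^ 2) =
      -6 / (r - 6) := by
  exact vertex_generating_function_general hr.ne' ha₁ ha hb fun n _ => hv n
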